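/- The sequence (b_k)_{k=0}^∞ with b_k = 1 − 2^{−(k+1)} (the Taylor coefficient sequence of f(z) = 1/((1−z)(2−z))) is totally positive, but the sequence (k·b_k)_{k=0}^∞ = (k(1 − 2^{−(k+1)}))_{k=0}^∞ is not totally positive. Consequently, the multiplier sequence (k)_{k=0}^∞ is not a TP_∞-preserver. -/

import Mathlib

/-- A real sequence `(a_k)` is totally positive (TP_∞) if all finite minors of the
infinite Toeplitz matrix `(a_{j-i})` (with `a_k = 0` for `k < 0`) are nonnegative. -/
def IsTotallyPositive (a : ℕ → ℝ) : Prop :=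
  ∀ (n : ℕ) (i j : Fin n → ℕ), StrictMono i → StrictMono j →
    0 ≤ (Matrix.of fun p q : Fin n => if i p ≤ j q then a (j q - i p) else 0).det

/-- A real sequence is `m`-times positive (TP_m) if all such minors of order at most `m`
are nonnegative. -/
def IsMultiplyPositive (m : ℕ) (a : ℕ → ℝ) : Prop :=
  ∀ (n : ℕ), n ≤ m → ∀ (i j : Fin n → ℕ), StrictMono i → StrictMono j →
    0 ≤ (Matrix.of fun p q : Fin n => if i p ≤ j q then a (j q - i p) else 0).det

/-- A nonnegative sequence `(a_k)` is a TP_∞-preserver if for every totally positive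
sequence `(b_k)`, the sequence `(a_k b_k)` is totally positive. -/
def IsTPPreserver (a : ℕ → ℝ) : Prop :=
  ∀ b : ℕ → ℝ, IsTotallyPositive b → IsTotallyPositive (fun k => a k * b k)

/-!
Multiplying a generating function by `1 / (1 - c z)`, `c ≥ 0`, preserves total positivity: on the
Toeplitz matrix it acts on columns, and in each minor, subtracting from every column a multiple of
its predecessor leaves nonnegative combinations of columns taken from successive disjoint blocks of
the original matrix. Expanding multilinearly expresses the minor as a nonnegative combination of
minors of the original matrix. Applying this to the constant `1` with `c = 1 / 2` and then `c = 1`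
gives, up to a factor, `1 / ((1 - z) (2 - z))`.

The generating function `z f'(z) = z (3 - 2 z) / ((1 - z) (2 - z)) ^ 2` of `k b_k` has a positive
zero, which no totally positive sequence allows; this shows up in a negative minor of order `5`.
-/

open Finset Matrix

section TotallyNonneg

variable {ι κ R : Type*} [CommRing R]

theorem det_of_sum_mul {m : Type*} [Fintype m] [DecidableEq m] (M : Matrix ι κ R) (i : m → ι)
    (S : m → Finset κ) (w : m → κ → R) :
    (of fun p q => ∑ l ∈ S q, w q l * M (i p) l).det =
      ∑ l ∈ Fintype.piFinset S, (∏ q, w q (l q)) * (M.submatrix i l).det := by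
  have hrows : (of fun p q => ∑ l ∈ S q, w q l * M (i p) l)ᵀ =
      fun q => ∑ l ∈ S q, w q l • fun p => M (i p) l := by
    ext q p
    simp [Finset.sum_apply]
  rw [← det_transpose, hrows]
  refine (detRowAlternating.toMultilinearMap.map_sum_finset _ S).trans
    (Finset.sum_congr rfl fun l _ => ?_)
  rw [MultilinearMap.map_smul_univ, smul_eq_mul, ← det_transpose (M.submatrix i l)]
  rfl

/-- The combinations of columns `∑ l ≤ j, c ^ (j - l) * M i l`. When `M` is the Toeplitz matrix of a
sequence, this multiplies the generating function of the sequence by `1 / (1 - c z)`. -/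
def geomColSum (c : R) (M : Matrix ι ℕ R) : Matrix ι ℕ R :=
  of fun i j => ∑ l ∈ range (j + 1), c ^ (j - l) * M i l

theorem geomColSum_eq_add_of_le (c : R) (M : Matrix ι ℕ R) (i : ι) {j k : ℕ} (hjk : j ≤ k) :
    geomColSum c M i k =
      ∑ l ∈ Ico (j + 1) (k + 1), c ^ (k - l) * M i l + c ^ (k - j) * geomColSum c M i j := by
  have hhead : ∑ l ∈ range (j + 1), c ^ (k - l) * M i l = c ^ (k - j) * geomColSum c M i j := by
    rw [geomColSum, of_apply, mul_sum]
    refine sum_congr rfl fun l hl => ?_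
    rw [← mul_assoc, ← pow_add, Nat.sub_add_sub_cancel hjk (mem_range_succ_iff.mp hl)]
  rw [← hhead, add_comm, sum_range_add_sum_Ico _ (by lia)]
  rfl

/-- For `j₀ < j₁ < ⋯`, the blocks `{0, …, j₀}`, `{j₀ + 1, …, j₁}`, …. -/
def columnBlock {n : ℕ} (j : Fin (n + 1) → ℕ) (q : Fin (n + 1)) : Finset ℕ :=
  Ico (Fin.cases 0 (fun r => j r.castSucc + 1) q) (j q + 1)

theorem strictMono_of_mem_columnBlock {n : ℕ} {j l : Fin (n + 1) → ℕ}
    (hl : ∀ q, l q ∈ columnBlock j q) : StrictMono l := by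
  refine Fin.strictMono_iff_lt_succ.mpr fun q => ?_
  have hlt : l q.castSucc < j q.castSucc + 1 := (mem_Ico.mp (hl q.castSucc)).2
  exact hlt.trans_le (mem_Ico.mp (hl q.succ)).1

theorem det_submatrix_geomColSum {n : ℕ} (c : R) (M : Matrix ι ℕ R) (i : Fin (n + 1) → ι)
    {j : Fin (n + 1) → ℕ} (hj : Monotone j) :
    ((geomColSum c M).submatrix i j).det =
      ∑ l ∈ Fintype.piFinset (columnBlock j),
        (∏ q, c ^ (j q - l q)) * (M.submatrix i l).det := by
  rw [← det_of_sum_mul M i (columnBlock j) fun q l => c ^ (j q - l)]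
  refine det_eq_of_forall_col_eq_smul_add_pred (fun q => c ^ (j q.succ - j q.castSucc))
    (fun p => ?_) fun p q => ?_
  · simp [geomColSum, columnBlock]
  · exact geomColSum_eq_add_of_le c M (i p) (hj q.castSucc_le_succ)

variable [PartialOrder R]

/-- A matrix is totally nonnegative if all its finite minors are nonnegative. -/
def IsTotallyNonneg [Preorder ι] [Preorder κ] (M : Matrix ι κ R) : Prop :=
  ∀ (n : ℕ) (i : Fin n → ι) (j : Fin n → κ), StrictMono i → StrictMono j →
    0 ≤ (M.submatrix i j).det

variable [IsOrderedRing R]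

theorem isTotallyNonneg_one [PartialOrder ι] [DecidableEq ι] :
    IsTotallyNonneg (1 : Matrix ι ι R) := by
  intro n i j hi hj
  by_cases hrange : Set.range i ⊆ Set.range j
  · have hrange_eq : Set.range i = Set.range j := by
      refine Set.eq_of_subset_of_ncard_le hrange ?_
      rw [Set.ncard_range_of_injective hi.injective, Set.ncard_range_of_injective hj.injective]
    obtain rfl : i = j := (hi.range_inj hj).mp hrange_eq
    rw [submatrix_one i hi.injective, det_one]
    exact zero_le_one
  · obtain ⟨_, ⟨p, rfl⟩, hp⟩ := Set.not_subset.mp hrange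
    refine (det_eq_zero_of_row_eq_zero p fun q => ?_).ge
    exact one_apply_ne fun hpq => hp ⟨q, hpq.symm⟩

theorem IsTotallyNonneg.smul [Preorder ι] [Preorder κ] {M : Matrix ι κ R} (hM : IsTotallyNonneg M)
    {c : R} (hc : 0 ≤ c) : IsTotallyNonneg (c • M) := by
  intro n i j hi hj
  change 0 ≤ (c • M.submatrix i j).det
  rw [det_smul]
  exact mul_nonneg (pow_nonneg hc _) (hM n i j hi hj)

theorem IsTotallyNonneg.geomColSum [Preorder ι] {M : Matrix ι ℕ R} (hM : IsTotallyNonneg M)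
    {c : R} (hc : 0 ≤ c) : IsTotallyNonneg (geomColSum c M) := by
  rintro (_ | n) i j hi hj
  · simp
  · rw [det_submatrix_geomColSum c M i hj.monotone]
    refine sum_nonneg fun l hl => mul_nonneg (prod_nonneg fun q _ => pow_nonneg hc _) ?_
    exact hM _ i l hi (strictMono_of_mem_columnBlock (Fintype.mem_piFinset.mp hl))

end TotallyNonneg

section Toeplitz

variable {R : Type*}

/-- The upper triangular Toeplitz matrix `(a (j - i))`, where `a` vanishes at negative indices. -/
def toeplitz [Zero R] (a : ℕ → R) : Matrix ℕ ℕ R :=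
  of fun i j => if i ≤ j then a (j - i) else 0

theorem toeplitz_single_zero_one [Zero R] [One R] :
    toeplitz (Pi.single 0 1 : ℕ → R) = 1 := by
  ext i j
  simp only [toeplitz, of_apply, one_apply, Pi.single_apply]
  grind

theorem toeplitz_smul [MulZeroClass R] (c : R) (a : ℕ → R) :
    toeplitz (c • a) = c • toeplitz a := by
  ext i j
  simp [toeplitz]

theorem geomColSum_toeplitz [CommRing R] (c : R) (a : ℕ → R) :
    geomColSum c (toeplitz a) =
      toeplitz fun k => ∑ l ∈ range (k + 1), c ^ (k - l) * a l := by
  ext i j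
  simp only [geomColSum, toeplitz, of_apply, mul_ite, mul_zero]
  split_ifs with hij
  · have hzero : ∑ l ∈ range i, (if i ≤ l then c ^ (j - l) * a (l - i) else 0) = 0 :=
      sum_eq_zero fun l hl => if_neg (mem_range.mp hl).not_ge
    rw [← sum_range_add_sum_Ico _ (show i ≤ j + 1 by lia), hzero, zero_add,
      sum_Ico_eq_sum_range, Nat.sub_add_comm hij]
    simp [Nat.sub_sub]
  · exact sum_eq_zero fun l hl => if_neg (by grind)

end Toeplitz

theorem isTotallyPositive_iff_isTotallyNonneg_toeplitz {a : ℕ → ℝ} :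
    IsTotallyPositive a ↔ IsTotallyNonneg (toeplitz a) :=
  Iff.rfl

namespace IsTotallyPositive

theorem single_zero_one : IsTotallyPositive (Pi.single 0 1) := by
  rw [isTotallyPositive_iff_isTotallyNonneg_toeplitz, toeplitz_single_zero_one]
  exact isTotallyNonneg_one

variable {a : ℕ → ℝ} {c : ℝ}

theorem smul (ha : IsTotallyPositive a) (hc : 0 ≤ c) : IsTotallyPositive (c • a) := by
  rw [isTotallyPositive_iff_isTotallyNonneg_toeplitz] at ha ⊢
  exact toeplitz_smul c a ▸ ha.smul hc

theorem geom_sum (ha : IsTotallyPositive a) (hc : 0 ≤ c) :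
    IsTotallyPositive fun k => ∑ l ∈ range (k + 1), c ^ (k - l) * a l := by
  rw [isTotallyPositive_iff_isTotallyNonneg_toeplitz] at ha ⊢
  exact geomColSum_toeplitz c a ▸ ha.geomColSum hc

theorem pow (hc : 0 ≤ c) : IsTotallyPositive fun k => c ^ k := by
  simpa [Pi.single_apply] using single_zero_one.geom_sum hc

theorem one_sub_pow_succ (hc₀ : 0 ≤ c) (hc₁ : c ≤ 1) :
    IsTotallyPositive fun k => 1 - c ^ (k + 1) := by
  convert ((pow hc₀).geom_sum zero_le_one).smul (sub_nonneg.mpr hc₁) using 2 with k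
  simpa using (mul_neg_geom_sum c (k + 1)).symm

end IsTotallyPositive

theorem det_toeplitz_natCast_mul_one_sub_half_pow :
    ((toeplitz fun k => (k : ℝ) * (1 - (1 / 2) ^ (k + 1))).submatrix
      (fun p : Fin 5 => (p : ℕ)) fun q : Fin 5 => (q : ℕ) + 2).det = -1 / 2048 := by
  let A : Matrix (Fin 5) (Fin 5) ℤ :=
    !![112, 180, 248, 315, 381;
        48, 112, 180, 248, 315;
         0,  48, 112, 180, 248;
         0,   0,  48, 112, 180;
         0,   0,   0,  48, 112]
  have hA : A.det = -2 ^ 19 := by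
    simp [A, det_succ_column_zero, Fin.sum_univ_succ, Fin.succAbove]
  have hminor : (toeplitz fun k => (k : ℝ) * (1 - (1 / 2) ^ (k + 1))).submatrix
      (fun p : Fin 5 => (p : ℕ)) (fun q : Fin 5 => (q : ℕ) + 2) =
      (1 / 64 : ℝ) • A.map (fun x => (x : ℝ)) := by
    ext p q
    fin_cases p <;> fin_cases q <;> norm_num [toeplitz, A]
  rw [hminor, det_smul, ← Int.cast_det, hA]
  norm_num

theorem not_isTotallyPositive_natCast_mul_one_sub_half_pow :
    ¬ IsTotallyPositive fun k => (k : ℝ) * (1 - (1 / 2 : ℝ) ^ (k + 1)) := by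
  intro h
  have hminor := h 5 (fun p => p) (fun q => q + 2) Fin.val_strictMono
    (Fin.val_strictMono.add_const 2)
  linarith [hminor.trans_eq det_toeplitz_natCast_mul_one_sub_half_pow]

/-- the sequence `b_k = 1 - 2^{-(k+1)}` is totally positive, but
`(k·b_k)` is not; hence the multiplier sequence `(k)` is not a TP_∞-preserver. -/
theorem stmt_18 :
    IsTotallyPositive (fun k => 1 - (1 / 2 : ℝ) ^ (k + 1)) ∧
    ¬ IsTotallyPositive (fun k => (k : ℝ) * (1 - (1 / 2 : ℝ) ^ (k + 1))) ∧
    ¬ IsTPPreserver (fun k => (k : ℝ)) :=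
  have hb : IsTotallyPositive fun k => 1 - (1 / 2 : ℝ) ^ (k + 1) :=
    .one_sub_pow_succ (by norm_num) (by norm_num)
  ⟨hb, not_isTotallyPositive_natCast_mul_one_sub_half_pow,
    fun h => not_isTotallyPositive_natCast_mul_one_sub_half_pow (h _ hb)⟩
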